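/- Let n ≥ 1 and let R be the ring of symmetric Laurent polynomials in x_1,…,x_n over ℂ and V = R[[p]] the ring of formal power series in p with coefficients in R. Let φ = (1,0,…,0,−1) ∈ ℤ^n. Suppose (P_λ)_{λ∈Λ_∞^n} is a family in V of the form P_λ = Σ_{k≥0} p^k Σ_{μ∈Λ_∞^n, μ ≤ λ+kφ} C^{(k)}_{λμ} m_μ, with scalars C^{(k)}_{λμ} ∈ ℂ satisfying C^{(k)}_{λλ} = δ_{k,0} (for each λ and k the index set {μ ∈ Λ_∞^n : μ ≤ λ+kφ} is finite). Then (P_λ) is a Schauder basis of V over ℂ[[p]]: for every f ∈ V there exist unique A_λ ∈ ℂ[[p]] such that for every N ∈ ℕ only finitely many λ satisfy A_λ P_λ ∉ p^{N+1}V, and for each N the coefficient of p^N in f equals the (finite) sum over λ of the coefficients of p^N in A_λ P_λ. -/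

import Mathlib

open Complex

noncomputable section

/-- `μ ∈ Λ_∞^n`: weakly decreasing integer vectors. -/
def Decr (n : ℕ) (μ : Fin n → ℤ) : Prop := ∀ i j : Fin n, i ≤ j → μ j ≤ μ i

/-- The dominance order `μ ≤ l` on `Λ_∞^n`. -/
def domLE (n : ℕ) (μ l : Fin n → ℤ) : Prop :=
  (∀ j : Fin n, ∑ i, (if i ≤ j then μ i else 0) ≤ ∑ i, (if i ≤ j then l i else 0)) ∧
    ∑ i, μ i = ∑ i, l i

/-- The monomial symmetric Laurent polynomial `m_μ`, as a finitely supported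
coefficient function (Laurent polynomial). -/
def mCoeff (n : ℕ) (μ : Fin n → ℤ) : (Fin n → ℤ) →₀ ℂ :=
  ∑ ν ∈ Finset.image (fun σ : Equiv.Perm (Fin n) => μ ∘ σ) Finset.univ, Finsupp.single ν 1

/-- The vector `φ = (1,0,…,0,−1)`. -/
def phiVec (n : ℕ) : Fin n → ℤ := fun i =>
  if (i : ℕ) = 0 then 1 else if (i : ℕ) = n - 1 then -1 else 0

section helpers

variable {Λ E : Type*} [AddCommGroup E] [Module ℂ E]

/-- Recursive construction of the coefficients. -/
def aRec (g : E → (Λ →₀ ℂ)) (P : Λ → ℕ → E) (f : ℕ → E) (N : ℕ) : Λ →₀ ℂ :=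
  g (f N - ∑ i : Fin N, Finsupp.linearCombination ℂ (fun l => P l (N - i)) (aRec g P f i))
termination_by N
decreasing_by exact i.2

lemma finsum_key (P : Λ → ℕ → E) (a : ℕ → (Λ →₀ ℂ)) (N : ℕ) :
    ∑ᶠ l, ∑ i ∈ Finset.range (N + 1), a i l • P l (N - i) =
      Finsupp.linearCombination ℂ (fun l => P l 0) (a N) +
      ∑ i : Fin N, Finsupp.linearCombination ℂ (fun l => P l (N - i)) (a i) := by
  have hs : ∀ i, (Function.support fun l => a i l • P l (N - i)) ⊆ ((a i).support : Set Λ) := by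
    intro i l hl
    simp only [Function.mem_support] at hl
    simp only [Finset.mem_coe, Finsupp.mem_support_iff]
    intro h
    exact hl (by simp [h])
  rw [finsum_sum_comm _ _ (fun i _ => ((a i).support.finite_toSet).subset (hs i))]
  rw [Finset.sum_range_succ, add_comm, Finset.sum_range]
  have h2 : ∀ i, ∑ᶠ l, a i l • P l (N - i) =
      Finsupp.linearCombination ℂ (fun l => P l (N - i)) (a i) := by
    intro i
    rw [finsum_eq_sum_of_support_subset _ (hs i), Finsupp.linearCombination_apply, Finsupp.sum]
  simp only [h2]
  rw [Nat.sub_self]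

lemma abstract_basis (P : Λ → ℕ → E) (S : Submodule ℂ E)
    (hli : LinearIndependent ℂ (fun l => P l 0)) (hmem : ∀ l k, P l k ∈ S)
    (hspan : ∀ s ∈ S, ∃ c : Λ →₀ ℂ, Finsupp.linearCombination ℂ (fun l => P l 0) c = s)
    (f : ℕ → E) (hf : ∀ N, f N ∈ S) :
    ∃! A : Λ → ℕ → ℂ,
      (∀ N : ℕ, {l | ∃ m ≤ N,
        (∑ i ∈ Finset.range (m + 1), A l i • P l (m - i)) ≠ 0}.Finite) ∧
      ∀ N : ℕ, f N = ∑ᶠ l, ∑ i ∈ Finset.range (N + 1), A l i • P l (N - i) := by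
  classical
  have hg : ∀ s : E, ∃ c : Λ →₀ ℂ, s ∈ S →
      Finsupp.linearCombination ℂ (fun l => P l 0) c = s := by
    intro s
    by_cases h : s ∈ S
    · obtain ⟨c, hc⟩ := hspan s h
      exact ⟨c, fun _ => hc⟩
    · exact ⟨0, fun h' => absurd h' h⟩
  choose g hg using hg
  have hP : ∀ k (c : Λ →₀ ℂ), Finsupp.linearCombination ℂ (fun l => P l k) c ∈ S := by
    intro k c
    rw [Finsupp.linearCombination_apply]
    exact Submodule.sum_mem _ fun l _ => S.smul_mem _ (hmem l k)
  have ha : ∀ N, Finsupp.linearCombination ℂ (fun l => P l 0) (aRec g P f N) =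
      f N - ∑ i : Fin N, Finsupp.linearCombination ℂ (fun l => P l (N - i)) (aRec g P f i) := by
    intro N
    conv_lhs => rw [aRec]
    apply hg
    exact S.sub_mem (hf N) (Submodule.sum_mem _ fun i _ => hP _ _)
  refine ⟨fun l i => aRec g P f i l, ⟨?_, ?_⟩, ?_⟩
  · intro N
    refine ((Finset.range (N + 1)).biUnion
      (fun i => (aRec g P f i).support)).finite_toSet.subset ?_
    rintro l ⟨m, hm, h⟩
    obtain ⟨i, hi, h⟩ := Finset.exists_ne_zero_of_sum_ne_zero h
    simp only [Finset.mem_coe, Finset.mem_biUnion, Finset.mem_range, Finsupp.mem_support_iff]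
    refine ⟨i, ?_, ?_⟩
    · have := Finset.mem_range.1 hi
      omega
    · intro h0
      exact h (by simp [h0])
  · intro N
    rw [finsum_key, ha]
    abel
  · rintro B ⟨hB1, hB2⟩
    have hz : ∀ N l, l ∉ {l | ∃ m ≤ N,
        (∑ i ∈ Finset.range (m + 1), B l i • P l (m - i)) ≠ 0} → ∀ m ≤ N, B l m = 0 := by
      intro N l hl m
      simp only [Set.mem_ofPred_eq, not_exists, not_and, not_not] at hl
      induction m using Nat.strong_induction_on with
      | _ m ih =>
        intro hm
        have h := hl m hm
        rw [Finset.sum_range_succ, Finset.sum_eq_zero, zero_add, Nat.sub_self] at h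
        · exact (smul_eq_zero.1 h).resolve_right (hli.ne_zero l)
        · intro i hi
          have := Finset.mem_range.1 hi
          rw [ih i this (by omega), zero_smul]
    have hfs : ∀ N, (Function.support fun l => B l N).Finite := by
      intro N
      refine (hB1 N).subset ?_
      intro l hl
      by_contra hc
      exact hl (hz N l hc N le_rfl)
    let b : ℕ → (Λ →₀ ℂ) := fun N => Finsupp.ofSupportFinite (fun l => B l N) (hfs N)
    have hb : ∀ N, b N = aRec g P f N := by
      intro N
      induction N using Nat.strong_induction_on with
      | _ N ih =>
        have h1 : f N = ∑ᶠ l, ∑ i ∈ Finset.range (N + 1), b i l • P l (N - i) := hB2 N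
        rw [finsum_key] at h1
        apply hli
        rw [ha, h1]
        have : ∑ i : Fin N, Finsupp.linearCombination ℂ (fun l => P l (N - i)) (b i) =
          ∑ i : Fin N, Finsupp.linearCombination ℂ (fun l => P l (N - i)) (aRec g P f i) :=
          Finset.sum_congr rfl fun i _ => by rw [ih i i.2]
        rw [this]
        abel
    funext l i
    exact DFunLike.congr_fun (hb i) l

lemma tri_li [PartialOrder Λ] (u : Λ → Λ →₀ ℂ) (h1 : ∀ l, u l l = 1)
    (hle : ∀ l μ, u l μ ≠ 0 → μ ≤ l) : LinearIndependent ℂ u := by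
  rw [linearIndependent_iff]
  intro c hc
  by_contra hne
  obtain ⟨l, hl⟩ := c.support.exists_maximal (Finsupp.support_nonempty_iff.2 hne)
  have h := DFunLike.congr_fun hc l
  rw [Finsupp.linearCombination_apply, Finsupp.sum, Finsupp.finsetSum_apply,
    Finset.sum_eq_single l] at h
  · simp [h1] at h
    exact Finsupp.mem_support_iff.1 hl.1 h
  · intro μ hμ hμl
    by_contra h'
    have h3 : u μ l ≠ 0 := by
      intro h0
      exact h' (by simp [h0])
    have h4 := hle _ _ h3
    exact hμl (le_antisymm (hl.2 hμ h4) h4)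
  · intro h'
    exact absurd hl.1 h'

lemma tri_span [PartialOrder Λ] (u : Λ → Λ →₀ ℂ) (h1 : ∀ l, u l l = 1)
    (hle : ∀ l μ, u l μ ≠ 0 → μ ≤ l) (hfin : ∀ l : Λ, (Set.Iic l).Finite) (s : Λ →₀ ℂ) :
    ∃ c : Λ →₀ ℂ, Finsupp.linearCombination ℂ u c = s := by
  classical
  have key : ∀ k : ℕ, ∀ l, (Set.Iic l).ncard = k →
      Finsupp.single l (1 : ℂ) ∈ LinearMap.range (Finsupp.linearCombination ℂ u) := by
    intro k
    induction k using Nat.strong_induction_on with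
    | _ k ih =>
      intro l hl
      have e : u l = Finsupp.single l 1 +
          ∑ μ ∈ (u l).support.erase l, (u l μ) • Finsupp.single μ (1 : ℂ) := by
        conv_lhs => rw [← Finsupp.sum_single (u l), Finsupp.sum]
        rw [← Finset.add_sum_erase (u l).support _ (a := l) (by simp [h1])]
        simp [h1]
      replace e := eq_sub_of_add_eq e.symm
      rw [e]
      refine Submodule.sub_mem _ ⟨Finsupp.single l 1, by simp⟩ (Submodule.sum_mem _ ?_)
      intro μ hμ
      refine Submodule.smul_mem _ _ (ih _ ?_ μ rfl)
      have hμ' := Finset.mem_erase.1 hμ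
      have hlt : μ < l := lt_of_le_of_ne (hle _ _ (Finsupp.mem_support_iff.1 hμ'.2)) hμ'.1
      rw [← hl]
      exact Set.ncard_lt_ncard (Set.Iic_ssubset_Iic.2 hlt) (hfin l)
  change s ∈ LinearMap.range (Finsupp.linearCombination ℂ u)
  rw [← Finsupp.sum_single s, Finsupp.sum]
  refine Submodule.sum_mem _ fun l _ => ?_
  have := Submodule.smul_mem _ (s l) (key _ l rfl)
  simpa using this

end helpers

lemma domLE_antisymm {n : ℕ} {μ l : Fin n → ℤ} (h1 : domLE n μ l) (h2 : domLE n l μ) :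
    μ = l := by
  have h : ∀ j : Fin n, ∑ i, (if i ≤ j then μ i - l i else 0) = 0 := by
    intro j
    have := le_antisymm (h1.1 j) (h2.1 j)
    rw [← sub_eq_zero, ← Finset.sum_sub_distrib] at this
    refine Eq.trans ?_ this
    refine Finset.sum_congr rfl fun i _ => ?_
    split_ifs <;> simp
  funext j
  induction j using WellFoundedLT.induction with
  | _ j ih =>
    have := h j
    rw [Finset.sum_eq_single j] at this
    · simp at this
      omega
    · intro i _ hij
      split_ifs with hle
      · rw [ih i (lt_of_le_of_ne hle hij), sub_self]
      · rfl
    · simp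

/-- The dominance order as a partial order. -/
@[reducible] def domOrder (n : ℕ) : PartialOrder {l : Fin n → ℤ // Decr n l} where
  le μ l := domLE n μ.1 l.1
  lt μ l := domLE n μ.1 l.1 ∧ ¬ domLE n l.1 μ.1
  lt_iff_le_not_ge _ _ := Iff.rfl
  le_refl μ := ⟨fun _ => le_rfl, rfl⟩
  le_trans _ _ _ h1 h2 := ⟨fun j => (h1.1 j).trans (h2.1 j), h1.2.trans h2.2⟩
  le_antisymm _ _ h1 h2 := Subtype.ext (domLE_antisymm h1 h2)

/-- Symmetric Laurent polynomials. -/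
def symSub (n : ℕ) : Submodule ℂ ((Fin n → ℤ) →₀ ℂ) where
  carrier := {f | ∀ (σ : Equiv.Perm (Fin n)) (ν : Fin n → ℤ), f (ν ∘ σ) = f ν}
  zero_mem' := by intro σ ν; rfl
  add_mem' := by
    intro f g hf hg σ ν
    simp only [Finsupp.add_apply, hf σ ν, hg σ ν]
  smul_mem' := by
    intro c f hf σ ν
    simp only [Finsupp.smul_apply, hf σ ν]

lemma mCoeff_apply (n : ℕ) (μ ν : Fin n → ℤ) [Decidable (∃ σ : Equiv.Perm (Fin n), μ ∘ σ = ν)] :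
    mCoeff n μ ν = if ∃ σ : Equiv.Perm (Fin n), μ ∘ σ = ν then 1 else 0 := by
  classical
  simp [mCoeff, Finsupp.finsetSum_apply, Finsupp.single_apply]

lemma mCoeff_mem (n : ℕ) (μ : Fin n → ℤ) : mCoeff n μ ∈ symSub n := by
  classical
  intro σ ν
  rw [mCoeff_apply, mCoeff_apply]
  congr 1
  apply propext
  constructor
  · rintro ⟨τ, h⟩
    refine ⟨σ.symm.trans τ, ?_⟩
    funext i
    have := congrFun h (σ.symm i)
    simpa using this
  · rintro ⟨τ, h⟩
    refine ⟨σ.trans τ, ?_⟩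
    funext i
    have := congrFun h (σ i)
    simpa using this

lemma decr_perm {n : ℕ} {μ ν : Fin n → ℤ} (hμ : Decr n μ) (hν : Decr n ν)
    (σ : Equiv.Perm (Fin n)) (h : μ ∘ σ = ν) : μ = ν := by
  have h1 : Monotone ((fun i => - μ i) ∘ (Equiv.refl (Fin n))) := by
    intro i j hij
    have := hμ i j hij
    simp only [Function.comp, Equiv.refl_apply]
    omega
  have h2 : Monotone ((fun i => - μ i) ∘ σ) := by
    intro i j hij
    have := hν i j hij
    rw [← h] at this
    simp only [Function.comp] at this ⊢
    omega
  have := Tuple.unique_monotone h1 h2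
  rw [← h]
  funext i
  have := congrFun this i
  simp only [Function.comp, Equiv.refl_apply] at this ⊢
  omega

lemma exists_decr {n : ℕ} (ν : Fin n → ℤ) : ∃ σ : Equiv.Perm (Fin n), Decr n (ν ∘ σ) := by
  refine ⟨Tuple.sort (fun i => - ν i), ?_⟩
  intro i j hij
  have := Tuple.monotone_sort (fun i => - ν i) hij
  simp only [Function.comp] at this ⊢
  omega

/-- Restriction to dominant exponents. -/
def rho (n : ℕ) : ((Fin n → ℤ) →₀ ℂ) →ₗ[ℂ] ({l : Fin n → ℤ // Decr n l} →₀ ℂ) :=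
  Finsupp.lcomapDomain Subtype.val Subtype.val_injective

lemma rho_apply (n : ℕ) (f : (Fin n → ℤ) →₀ ℂ) (l : {l : Fin n → ℤ // Decr n l}) :
    rho n f l = f l.1 := rfl

lemma rho_inj {n : ℕ} {f g : (Fin n → ℤ) →₀ ℂ} (hf : f ∈ symSub n) (hg : g ∈ symSub n)
    (h : rho n f = rho n g) : f = g := by
  ext ν
  obtain ⟨σ, hσ⟩ := exists_decr ν
  rw [← hf σ ν, ← hg σ ν]
  exact DFunLike.congr_fun h ⟨_, hσ⟩

/-- a family `(P_λ)` of formal power series in `p` with symmetric Laurent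
polynomial coefficients, which is triangular in the sense of Langmann–Noumi–Shiraishi, is a
Schauder basis of `V = R[[p]]` over `ℂ[[p]]`.  Elements of `V` are encoded as functions
`ℕ → ((Fin n → ℤ) →₀ ℂ)` (the coefficient of `p^k` being a Laurent polynomial), and
elements of `ℂ[[p]]` as functions `ℕ → ℂ`. -/
theorem schauder_basis_elliptic_macdonald (n : ℕ) (hn : 1 ≤ n)
    (P : {l : Fin n → ℤ // Decr n l} → ℕ → ((Fin n → ℤ) →₀ ℂ))
    (C : {l : Fin n → ℤ // Decr n l} → ℕ → {l : Fin n → ℤ // Decr n l} → ℂ)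
    (hsupp : ∀ l k μ, C l k μ ≠ 0 → domLE n μ.1 (fun i => l.1 i + (k : ℤ) * phiVec n i))
    (hfin : ∀ (l : {l : Fin n → ℤ // Decr n l}) (k : ℕ),
      {μ : {l : Fin n → ℤ // Decr n l} |
        domLE n μ.1 (fun i => l.1 i + (k : ℤ) * phiVec n i)}.Finite)
    (hdiag : ∀ l k, C l k l = if k = 0 then 1 else 0)
    (hPdef : ∀ l k, P l k = ∑ᶠ μ, C l k μ • mCoeff n μ.1)
    (f : ℕ → ((Fin n → ℤ) →₀ ℂ))
    (hf : ∀ (N : ℕ) (σ : Equiv.Perm (Fin n)) (ν : Fin n → ℤ), f N (ν ∘ σ) = f N ν) :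
    ∃! A : {l : Fin n → ℤ // Decr n l} → ℕ → ℂ,
      (∀ N : ℕ, {l | ∃ m ≤ N,
        (∑ i ∈ Finset.range (m + 1), A l i • P l (m - i)) ≠ 0}.Finite) ∧
      ∀ N : ℕ, f N = ∑ᶠ l, ∑ i ∈ Finset.range (N + 1), A l i • P l (N - i) := by
  classical
  have hsf : ∀ l k, (Function.support fun μ => C l k μ • mCoeff n μ.1).Finite := by
    intro l k
    refine (hfin l k).subset ?_
    intro μ hμ
    refine hsupp l k μ ?_
    intro h0
    exact hμ (by simp [h0])
  have hmem : ∀ l k, P l k ∈ symSub n := by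
    intro l k
    rw [hPdef]
    exact finsum_induction (· ∈ symSub n) (Submodule.zero_mem _)
      (fun _ _ => Submodule.add_mem _) (fun μ => Submodule.smul_mem _ _ (mCoeff_mem _ _))
  have hrho : ∀ l k μ, rho n (P l k) μ = C l k μ := by
    intro l k μ
    rw [rho_apply, hPdef, finsum_eq_sum _ (hsf l k), Finsupp.finsetSum_apply,
      Finset.sum_eq_single μ]
    · rw [Finsupp.smul_apply, mCoeff_apply, if_pos ⟨Equiv.refl _, rfl⟩]
      simp
    · intro ν _ hν
      rw [Finsupp.smul_apply, mCoeff_apply, if_neg, smul_zero]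
      rintro ⟨σ, h⟩
      exact hν (Subtype.ext (decr_perm ν.2 μ.2 σ h))
    · intro h
      have h' : C l k μ • mCoeff n μ.1 = 0 := by
        by_contra hc
        exact h ((hsf l k).mem_toFinset.2 hc)
      rw [h']
      rfl
  have h1 : ∀ l, rho n (P l 0) l = 1 := fun l => by rw [hrho, hdiag, if_pos rfl]
  have hle : ∀ l μ, rho n (P l 0) μ ≠ 0 → domLE n μ.1 l.1 := by
    intro l μ h
    rw [hrho] at h
    have := hsupp _ _ _ h
    simpa using this
  have hfin' : ∀ l : {l : Fin n → ℤ // Decr n l}, (@Set.Iic _ (domOrder n).toPreorder l).Finite := by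
    intro l
    refine (hfin l 0).subset ?_
    intro μ hμ
    have hμ' : domLE n μ.1 l.1 := hμ
    simpa using hμ'
  refine abstract_basis P (symSub n) ?_ hmem ?_ f hf
  · exact LinearIndependent.of_comp (rho n) (@tri_li _ (domOrder n) (fun l => rho n (P l 0)) h1 hle)
  · intro s hs
    obtain ⟨c, hc⟩ := @tri_span _ (domOrder n) (fun l => rho n (P l 0)) h1 hle hfin' (rho n s)
    refine ⟨c, rho_inj ?_ hs ?_⟩
    · rw [Finsupp.linearCombination_apply]
      exact Submodule.sum_mem _ fun l _ => Submodule.smul_mem _ _ (hmem l 0)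
    · rw [← hc, Finsupp.apply_linearCombination]
      rfl
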